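/- arXiv:2109.09239 — 2 statements merged into one kernel-verified Lean document; each statement's English description precedes it below -/
import Mathlib

section
/- Assume Condition (A1). For every A₀ > 0 there exist constants K₀, M₁, α₀ > 0, depending only on A₀ and the constants C_ξ, H_ξ, α_ξ of (A1), such that for every θ ∈ ℝⁿ and every M ≥ 0: ℙ_θ( |Ĩ(K₀)| ≥ M₁·|I_*(A₀,θ)| + M ) ≤ H₀·e^{−α₀·ℓ(|I_*(A₀,θ)|)}·e^{−α₀·M/2}. -/
open MeasureTheory Finset
open scoped Classical

/-- `ell n k = k * log(q*n/k)` with `q = e^2`; equals `0` at `k = 0` by Lean's conventions. -/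
noncomputable def ell (n k : ℕ) : ℝ := (k : ℝ) * Real.log (Real.exp 2 * n / k)

theorem two_le_log_ratio {n k : ℕ} (hk : 0 < k) (hkn : k ≤ n) :
    2 ≤ Real.log (Real.exp 2 * n / k) := by
  have hk' : (0 : ℝ) < k := by exact_mod_cast hk
  have hkn' : (k : ℝ) ≤ n := by exact_mod_cast hkn
  have hn' : (0 : ℝ) < n := hk'.trans_le hkn'
  rw [Real.le_log_iff_exp_le (by positivity), le_div_iff₀ hk']
  gcongr

theorem ell_zero (n : ℕ) : ell n 0 = 0 := by simp [ell]

theorem two_mul_le_ell {n k : ℕ} (hkn : k ≤ n) : 2 * (k : ℝ) ≤ ell n k := by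
  rcases Nat.eq_zero_or_pos k with rfl | hk
  · simp [ell]
  · have := mul_le_mul_of_nonneg_left (two_le_log_ratio hk hkn) (Nat.cast_nonneg (α := ℝ) k)
    rw [ell]
    linarith

/-- Change of scale in the logarithm of `ell`. -/
theorem ell_eq_rescale {n d k : ℕ} (hd : 0 < d) (hk : 0 < k) (hn : 0 < n) :
    ell n d = d * Real.log (Real.exp 2 * n / k) + d * Real.log ((k : ℝ) / d) := by
  have hd' : (0 : ℝ) < d := by exact_mod_cast hd
  have hk' : (0 : ℝ) < k := by exact_mod_cast hk
  have hn' : (0 : ℝ) < n := by exact_mod_cast hn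
  rw [ell, ← mul_add, ← Real.log_mul (by positivity) (by positivity)]
  congr 2
  field_simp

theorem ell_mono {n d k : ℕ} (hdk : d ≤ k) (hkn : k ≤ n) : ell n d ≤ ell n k := by
  rcases Nat.eq_zero_or_pos d with rfl | hd
  · have := two_mul_le_ell hkn
    have : (0 : ℝ) ≤ k := Nat.cast_nonneg k
    rw [ell_zero]
    linarith
  · have hk : 0 < k := by omega
    have hd' : (0 : ℝ) < d := by exact_mod_cast hd
    have hdk' : (d : ℝ) ≤ k := by exact_mod_cast hdk
    have hL := two_le_log_ratio hk hkn
    have hlog : Real.log ((k : ℝ) / d) ≤ k / d - 1 :=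
      Real.log_le_sub_one_of_pos (div_pos (by linarith) hd')
    have hmul : (d : ℝ) * Real.log ((k : ℝ) / d) ≤ k - d := by
      calc (d : ℝ) * Real.log ((k : ℝ) / d) ≤ d * (k / d - 1) := by gcongr
        _ = k - d := by field_simp
    rw [ell_eq_rescale hd hk (by omega), ell]
    nlinarith

theorem two_mul_ell_le {n s k : ℕ} (hsk : 4 * s ≤ k) (hkn : k ≤ n) :
    2 * ell n s ≤ ell n k := by
  rcases Nat.eq_zero_or_pos s with rfl | hs
  · have := two_mul_le_ell hkn
    have : (0 : ℝ) ≤ k := Nat.cast_nonneg k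
    rw [ell_zero]
    linarith
  · have hk : 0 < k := by omega
    have hs' : (0 : ℝ) < s := by exact_mod_cast hs
    have hsk' : 4 * (s : ℝ) ≤ k := by exact_mod_cast hsk
    have hk' : (0 : ℝ) < k := by linarith
    have hL := two_le_log_ratio hk hkn
    have hlog : Real.log ((k : ℝ) / s) ≤ k / s / 2 := by
      have h := Real.log_le_sub_one_of_pos (show (0 : ℝ) < k / s / 2 by positivity)
      rw [Real.log_div (by positivity) (by norm_num)] at h
      have := Real.log_two_lt_d9
      linarith
    have hmul : (s : ℝ) * Real.log ((k : ℝ) / s) ≤ k / 2 := by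
      calc (s : ℝ) * Real.log ((k : ℝ) / s) ≤ s * (k / s / 2) := by gcongr
        _ = k / 2 := by field_simp
    rw [ell_eq_rescale hs hk (by omega), ell]
    nlinarith

theorem ell_add_le {n : ℕ} (hn : 0 < n) (s d : ℕ) : ell n (s + d) ≤ ell n s + ell n d := by
  rcases Nat.eq_zero_or_pos s with rfl | hs
  · simp [ell_zero]
  rcases Nat.eq_zero_or_pos d with rfl | hd
  · simp [ell_zero]
  have hs' : (0 : ℝ) < s := by exact_mod_cast hs
  have hd' : (0 : ℝ) < d := by exact_mod_cast hd
  have hn' : (0 : ℝ) < n := by exact_mod_cast hn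
  simp only [ell, Nat.cast_add, add_mul]
  gcongr <;> linarith

theorem choose_mul_exp_neg_ell_le {n k : ℕ} (hkn : k ≤ n) :
    (n.choose k : ℝ) * Real.exp (-ell n k) ≤ Real.exp (-1) ^ k := by
  rcases Nat.eq_zero_or_pos k with rfl | hk
  · simp [ell_zero]
  have hk' : (0 : ℝ) < k := by exact_mod_cast hk
  have hn' : (0 : ℝ) < n := by exact_mod_cast (by omega : 0 < n)
  have hf : (0 : ℝ) < k.factorial := by exact_mod_cast k.factorial_pos
  have hell : Real.exp (ell n k) = (Real.exp 2 * n / k) ^ k := by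
    rw [ell, Real.exp_nat_mul, Real.exp_log (by positivity)]
  have hexp : (k : ℝ) ^ k / k.factorial ≤ Real.exp 1 ^ k := by
    rw [← Real.exp_nat_mul, mul_one]
    exact Real.pow_div_factorial_le_exp k hk'.le k
  have hchoose : (n.choose k : ℝ) ≤ n ^ k / k.factorial := Nat.choose_le_pow_div k n
  rw [Real.exp_neg, hell, ← div_eq_mul_inv, div_le_iff₀ (by positivity)]
  calc (n.choose k : ℝ) ≤ n ^ k / k.factorial := hchoose
    _ = (k ^ k / k.factorial) * (n / k) ^ k := by
        rw [div_pow]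
        field_simp
    _ ≤ Real.exp 1 ^ k * (n / k) ^ k := by gcongr
    _ = Real.exp (-1) ^ k * (Real.exp 2 * n / k) ^ k := by
        rw [← mul_pow, ← mul_pow]
        have : Real.exp 1 = Real.exp (-1) * Real.exp 2 := by
          rw [← Real.exp_add]
          norm_num
        rw [this]
        congr 1
        ring

theorem sum_exp_neg_ell_le (n : ℕ) :
    ∑ J : Finset (Fin n), Real.exp (-ell n J.card) ≤ 1 / (1 - Real.exp (-1)) := by
  have hlt : Real.exp (-1) < 1 := by simp
  calc ∑ J : Finset (Fin n), Real.exp (-ell n J.card)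
      = ∑ k ∈ range (n + 1), (n.choose k : ℝ) * Real.exp (-ell n k) := by
        have := Finset.sum_powerset_apply_card (fun k => Real.exp (-ell n k))
          (x := (Finset.univ : Finset (Fin n)))
        simpa using this
    _ ≤ ∑ k ∈ range (n + 1), Real.exp (-1) ^ k :=
        Finset.sum_le_sum fun k hk =>
          choose_mul_exp_neg_ell_le (Nat.lt_succ_iff.mp (Finset.mem_range.mp hk))
    _ ≤ ∑' k, Real.exp (-1) ^ k :=
        (summable_geometric_of_lt_one (Real.exp_pos _).le hlt).sum_le_tsum _
          fun k _ => by positivity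
    _ = 1 / (1 - Real.exp (-1)) := by
        rw [tsum_geometric_of_lt_one (Real.exp_pos _).le hlt, one_div]

theorem sum_compl_eq_add_sum_sdiff {n : ℕ} (f : Fin n → ℝ) (I J : Finset (Fin n)) :
    ∑ i ∈ Iᶜ, f i = ∑ i ∈ (I ∪ J)ᶜ, f i + ∑ i ∈ J \ I, f i := by
  rw [← Finset.sum_union]
  · congr 1
    ext i
    simp only [mem_compl, mem_union, mem_sdiff]
    tauto
  · rw [Finset.disjoint_left]
    intro i
    simp only [mem_compl, mem_union, mem_sdiff]
    tauto

/-- Deterministic core: a preselected set much larger than the active set carries large noise. -/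
theorem noise_lower_bound {n : ℕ} {σ A B : ℝ} (hσ : 0 < σ) (hA : 0 < A) (hB : 0 < B)
    (x θ : Fin n → ℝ) (I J : Finset (Fin n))
    (hJ : (∑ i ∈ Jᶜ, x i ^ 2) + 4 * (A + B) * σ ^ 2 * ell n J.card
      ≤ (∑ i ∈ Iᶜ, x i ^ 2) + 4 * (A + B) * σ ^ 2 * ell n I.card)
    (hI : (∑ i ∈ Iᶜ, θ i ^ 2) + A * σ ^ 2 * ell n I.card
      ≤ (∑ i ∈ (I ∪ J)ᶜ, θ i ^ 2) + A * σ ^ 2 * ell n (I ∪ J).card)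
    (hIJ : 4 * I.card ≤ J.card) :
    B * ell n J.card ≤ ∑ i ∈ J, ((x i - θ i) / σ) ^ 2 := by
  have hJn : J.card ≤ n := by simpa using J.card_le_univ
  have hσ2 : 0 < σ ^ 2 := by positivity
  have hxsum : ∑ i ∈ Iᶜ, x i ^ 2 ≤ ∑ i ∈ Jᶜ, x i ^ 2 + ∑ i ∈ J \ I, x i ^ 2 := by
    rw [sum_compl_eq_add_sum_sdiff _ I J]
    gcongr
    exact Finset.subset_union_right
  have hsplit : ∑ i ∈ J \ I, x i ^ 2 ≤
      2 * ∑ i ∈ J \ I, θ i ^ 2 + 2 * σ ^ 2 * ∑ i ∈ J, ((x i - θ i) / σ) ^ 2 := by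
    calc ∑ i ∈ J \ I, x i ^ 2
        ≤ ∑ i ∈ J \ I, (2 * θ i ^ 2 + 2 * σ ^ 2 * ((x i - θ i) / σ) ^ 2) := by
          refine Finset.sum_le_sum fun i _ => ?_
          have : σ ^ 2 * ((x i - θ i) / σ) ^ 2 = (x i - θ i) ^ 2 := by field_simp
          nlinarith [sq_nonneg (x i - 2 * θ i)]
      _ = 2 * ∑ i ∈ J \ I, θ i ^ 2
          + 2 * σ ^ 2 * ∑ i ∈ J \ I, ((x i - θ i) / σ) ^ 2 := by
          rw [Finset.sum_add_distrib, Finset.mul_sum, Finset.mul_sum]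
      _ ≤ _ := by
          gcongr
          exact Finset.sdiff_subset
  have hunion : ell n (I ∪ J).card ≤ ell n I.card + ell n J.card := by
    have hcard : (I ∪ J).card = I.card + (J \ I).card := by
      rw [← Finset.union_sdiff_self_eq_union, Finset.card_union_of_disjoint Finset.disjoint_sdiff]
    have hmono := ell_mono (Finset.card_le_card (Finset.sdiff_subset : J \ I ⊆ J)) hJn
    rcases Nat.eq_zero_or_pos n with rfl | hn
    · simp [ell]
    · have := ell_add_le hn I.card (J \ I).card
      rw [hcard]
      linarith
  have hθsum : ∑ i ∈ J \ I, θ i ^ 2 ≤ A * σ ^ 2 * ell n J.card := by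
    have h := mul_le_mul_of_nonneg_left hunion (mul_pos hA hσ2).le
    rw [sum_compl_eq_add_sum_sdiff _ I J] at hI
    linarith
  have hhalf := mul_le_mul_of_nonneg_left (two_mul_ell_le hIJ hJn)
    (show 0 ≤ 2 * (A + B) * σ ^ 2 by positivity)
  refine le_of_mul_le_mul_left ?_ hσ2
  linarith

theorem stmt_1 (Cξ Hξ αξ : ℝ) (hCξ : 0 < Cξ) (hHξ : 0 < Hξ) (hαξ : 0 < αξ) (A₀ : ℝ) (hA₀ : 0 < A₀) :
    ∃ K₀ M₁ α₀ : ℝ, 0 < K₀ ∧ 0 < M₁ ∧ 0 < α₀ ∧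
      ∀ (n : ℕ) (σ : ℝ), 0 < σ →
        ∀ P : (Fin n → ℝ) → Measure (Fin n → ℝ),
          (∀ θ, IsProbabilityMeasure (P θ)) →
          (∀ (θ : Fin n → ℝ) (I : Finset (Fin n)) (M : ℝ), 0 ≤ M →
            P θ {x | Cξ * I.card + M ≤ ∑ i ∈ I, ((x i - θ i) / σ) ^ 2}
              ≤ ENNReal.ofReal (Hξ * Real.exp (-αξ * M))) →
          ∀ Itil : (Fin n → ℝ) → Finset (Fin n),
            (∀ (x : Fin n → ℝ) (I : Finset (Fin n)),
              (∑ i ∈ (Itil x)ᶜ, x i ^ 2) + K₀ * σ ^ 2 * ell n (Itil x).card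
                ≤ (∑ i ∈ Iᶜ, x i ^ 2) + K₀ * σ ^ 2 * ell n I.card) →
            ∀ (θ : Fin n → ℝ) (Istar : Finset (Fin n)),
              (∀ I : Finset (Fin n),
                (∑ i ∈ Istarᶜ, θ i ^ 2) + A₀ * σ ^ 2 * ell n Istar.card
                  ≤ (∑ i ∈ Iᶜ, θ i ^ 2) + A₀ * σ ^ 2 * ell n I.card) →
              ∀ M : ℝ, 0 ≤ M →
                P θ {x | M₁ * Istar.card + M ≤ ((Itil x).card : ℝ)}
                  ≤ ENNReal.ofReal (Hξ / (1 - Real.exp (-1)) *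
                      Real.exp (-α₀ * ell n Istar.card) * Real.exp (-α₀ * M / 2)) := by
  refine ⟨4 * (A₀ + (Cξ / 2 + 2 / αξ)), 4, 1, by positivity, by norm_num, by norm_num, ?_⟩
  intro n σ hσ P _ hA1 Itil hItil θ Istar hIstar M hM
  set c : ℝ := Real.exp (-1 * ell n Istar.card) * Real.exp (-1 * M / 2) with hc
  set T : Finset (Finset (Fin n)) :=
    Finset.univ.filter fun J => 4 * (Istar.card : ℝ) + M ≤ J.card with hT
  have hlarge : ∀ J ∈ T, 4 * Istar.card ≤ J.card ∧ J.card ≤ n := by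
    intro J hJ
    refine ⟨?_, by simpa using J.card_le_univ⟩
    have := (Finset.mem_filter.mp hJ).2
    exact_mod_cast (by linarith : 4 * (Istar.card : ℝ) ≤ J.card)
  have hsubset : {x | 4 * (Istar.card : ℝ) + M ≤ ((Itil x).card : ℝ)} ⊆
      ⋃ J ∈ T, {x | Cξ * J.card + 2 / αξ * ell n J.card ≤
        ∑ i ∈ J, ((x i - θ i) / σ) ^ 2} := by
    intro x hx
    have hmem : Itil x ∈ T := Finset.mem_filter.mpr ⟨Finset.mem_univ _, hx⟩
    obtain ⟨h4, hn⟩ := hlarge _ hmem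
    refine Set.mem_biUnion hmem ?_
    have hnoise := noise_lower_bound hσ hA₀ (by positivity : 0 < Cξ / 2 + 2 / αξ) x θ
      Istar (Itil x) (hItil x Istar) (hIstar _) h4
    have := mul_le_mul_of_nonneg_left (two_mul_le_ell hn) (by positivity : 0 ≤ Cξ / 2)
    simp only [Set.mem_ofPred_eq]
    linarith
  have hterm : ∀ J ∈ T, P θ {x | Cξ * J.card + 2 / αξ * ell n J.card ≤
      ∑ i ∈ J, ((x i - θ i) / σ) ^ 2} ≤
        ENNReal.ofReal (Hξ * c * Real.exp (-ell n J.card)) := by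
    intro J hJ
    obtain ⟨h4, hn⟩ := hlarge J hJ
    have hell := two_mul_le_ell hn
    have hhalf := two_mul_ell_le h4 hn
    have hcard := (Finset.mem_filter.mp hJ).2
    have hs : (0 : ℝ) ≤ Istar.card := Nat.cast_nonneg _
    have hnonneg : 0 ≤ ell n J.card := by linarith
    refine (hA1 θ J _ (by positivity)).trans (ENNReal.ofReal_le_ofReal ?_)
    rw [hc, mul_assoc, ← Real.exp_add, ← Real.exp_add]
    have : -αξ * (2 / αξ * ell n J.card) = -2 * ell n J.card := by field_simp
    rw [this]
    gcongr
    linarith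
  calc P θ {x | 4 * (Istar.card : ℝ) + M ≤ ((Itil x).card : ℝ)}
      ≤ ∑ J ∈ T, P θ {x | Cξ * J.card + 2 / αξ * ell n J.card ≤
          ∑ i ∈ J, ((x i - θ i) / σ) ^ 2} :=
        (measure_mono hsubset).trans (measure_biUnion_finset_le _ _)
    _ ≤ ∑ J ∈ T, ENNReal.ofReal (Hξ * c * Real.exp (-ell n J.card)) :=
        Finset.sum_le_sum hterm
    _ = ENNReal.ofReal (∑ J ∈ T, Hξ * c * Real.exp (-ell n J.card)) :=
        (ENNReal.ofReal_sum_of_nonneg fun J _ => by positivity).symm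
    _ ≤ _ := by
        refine ENNReal.ofReal_le_ofReal ?_
        calc ∑ J ∈ T, Hξ * c * Real.exp (-ell n J.card)
            ≤ ∑ J : Finset (Fin n), Hξ * c * Real.exp (-ell n J.card) :=
              Finset.sum_le_sum_of_subset_of_nonneg (Finset.subset_univ _)
                fun J _ _ => by positivity
          _ = Hξ * c * ∑ J : Finset (Fin n), Real.exp (-ell n J.card) := by
              rw [Finset.mul_sum]
          _ ≤ Hξ * c * (1 / (1 - Real.exp (-1))) := by
              gcongr
              exact sum_exp_neg_ell_le n
          _ = _ := by
              rw [hc]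
              ring
end

section
/- Assume Condition (A1) and the standing assumptions. Then there exist constants H₃, α₄ > 0, depending only on the constants of (A1) and of the standing assumptions, such that for every θ ∈ Θ(K) the Hamming risk of the selector satisfies E_θ[ |Î(K)∖I_*| + |I_*∖Î(K)| ] ≤ H₃·n·(n/(|I_*| ∨ 1))^{−α₄}. -/
open MeasureTheory Finset
open scoped Classical

/-- The selector `Î(K)`: empty if the preselector `Ĩ(K)` is empty, otherwise all coordinates
with `X_i² ≥ K σ² log(q n / |Ĩ(K)|)`, where `q = e²`. -/
noncomputable def ihat {n : ℕ} (K σ : ℝ) (Itil : (Fin n → ℝ) → Finset (Fin n))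
    (x : Fin n → ℝ) : Finset (Fin n) :=
  if Itil x = ∅ then ∅
  else Finset.univ.filter fun i =>
    K * σ ^ 2 * Real.log (Real.exp 2 * (n : ℝ) / (Itil x).card) ≤ (x i) ^ 2

lemma ell_succ_sub_le {n : ℕ} (hn : 0 < n) (s : ℕ) :
    ell n (s + 1) - ell n s ≤ Real.log (Real.exp 2 * n / (s + 1 : ℕ)) := by
  have hn' : (0 : ℝ) < n := by exact_mod_cast hn
  rcases Nat.eq_zero_or_pos s with rfl | hs
  · simp [ell]
  · have hs' : (0 : ℝ) < s := by exact_mod_cast hs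
    have hle : Real.log (Real.exp 2 * n / (s + 1 : ℕ)) ≤ Real.log (Real.exp 2 * n / s) := by
      apply Real.log_le_log (by positivity)
      gcongr
      exact Nat.le_succ s
    have := mul_le_mul_of_nonneg_left hle hs'.le
    simp only [ell]
    push_cast at *
    linarith

lemma le_ell_succ_sub {n : ℕ} (hn : 0 < n) (s : ℕ) :
    Real.log (Real.exp 2 * n / (s + 1 : ℕ)) - 1 ≤ ell n (s + 1) - ell n s := by
  have hn' : (0 : ℝ) < n := by exact_mod_cast hn
  rcases Nat.eq_zero_or_pos s with rfl | hs
  · simp [ell]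
  · have hs' : (0 : ℝ) < s := by exact_mod_cast hs
    have hratio : Real.log (Real.exp 2 * n / s) - Real.log (Real.exp 2 * n / (s + 1 : ℕ))
        ≤ 1 / s := by
      rw [← Real.log_div (by positivity) (by positivity)]
      refine (Real.log_le_sub_one_of_pos (by positivity)).trans (le_of_eq ?_)
      push_cast
      field_simp
      ring
    have := mul_le_mul_of_nonneg_left hratio hs'.le
    rw [mul_one_div_cancel hs'.ne'] at this
    simp only [ell]
    push_cast at *
    linarith

section Minimizer

variable {n : ℕ} {A σ : ℝ} {θ : Fin n → ℝ} {S : Finset (Fin n)}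

lemma sq_le_of_notMem_minimizer (hA : 0 ≤ A)
    (hS : ∀ I : Finset (Fin n), (∑ i ∈ Sᶜ, θ i ^ 2) + A * σ ^ 2 * ell n S.card
      ≤ (∑ i ∈ Iᶜ, θ i ^ 2) + A * σ ^ 2 * ell n I.card) {i : Fin n} (hi : i ∉ S) :
    θ i ^ 2 ≤ A * σ ^ 2 * Real.log (Real.exp 2 * n / (S.card + 1 : ℕ)) := by
  have hmin := hS (insert i S)
  have hsum : ∑ j ∈ Sᶜ, θ j ^ 2 = θ i ^ 2 + ∑ j ∈ (insert i S)ᶜ, θ j ^ 2 := by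
    rw [compl_insert, Finset.add_sum_erase _ (fun j => θ j ^ 2) (by simpa using hi)]
  rw [hsum, card_insert_of_notMem hi] at hmin
  have := mul_le_mul_of_nonneg_left (ell_succ_sub_le i.pos S.card)
    (by positivity : 0 ≤ A * σ ^ 2)
  linarith

lemma le_sq_of_mem_minimizer (hA : 0 ≤ A)
    (hS : ∀ I : Finset (Fin n), (∑ i ∈ Sᶜ, θ i ^ 2) + A * σ ^ 2 * ell n S.card
      ≤ (∑ i ∈ Iᶜ, θ i ^ 2) + A * σ ^ 2 * ell n I.card) {i : Fin n} (hi : i ∈ S) :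
    A * σ ^ 2 * (Real.log (Real.exp 2 * n / S.card) - 1) ≤ θ i ^ 2 := by
  have hmin := hS (S.erase i)
  have hcard : S.card = (S.erase i).card + 1 := (card_erase_add_one hi).symm
  have hsum : ∑ j ∈ (S.erase i)ᶜ, θ j ^ 2 = θ i ^ 2 + ∑ j ∈ Sᶜ, θ j ^ 2 := by
    rw [compl_erase, Finset.sum_insert (by simpa using hi)]
  have := mul_le_mul_of_nonneg_left (le_ell_succ_sub i.pos (S.erase i).card)
    (by positivity : 0 ≤ A * σ ^ 2)
  rw [← hcard] at this
  rw [hsum] at hmin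
  linarith

end Minimizer

/-- No measurability of `D` is needed, since `μ` is evaluated as an outer measure. -/
lemma lintegral_card_le_sum_measure {Ω ι : Type*} [MeasurableSpace Ω] [Fintype ι]
    (μ : Measure Ω) (D : Ω → Finset ι) :
    ∫⁻ x, ENNReal.ofReal ((D x).card : ℝ) ∂μ ≤ ∑ i, μ {x | i ∈ D x} := by
  calc ∫⁻ x, ENNReal.ofReal ((D x).card : ℝ) ∂μ
      ≤ ∫⁻ x, ∑ i, (toMeasurable μ {x | i ∈ D x}).indicator 1 x ∂μ := by
        refine lintegral_mono fun x => ?_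
        have hcard : ENNReal.ofReal ((D x).card : ℝ) = ∑ i ∈ D x, 1 := by simp
        rw [hcard]
        refine (Finset.sum_le_sum fun i hi => ?_).trans
          (Finset.sum_le_sum_of_subset (Finset.subset_univ (D x)))
        rw [Set.indicator_of_mem (subset_toMeasurable μ _ hi)]
        rfl
    _ = ∑ i, μ {x | i ∈ D x} := by
        rw [lintegral_finsetSum _ fun i _ =>
          measurable_one.indicator (measurableSet_toMeasurable _ _)]
        simp [measurableSet_toMeasurable, measure_toMeasurable]

lemma measure_tail_le {Ω : Type*} [MeasurableSpace Ω] (μ : Measure Ω) [IsProbabilityMeasure μ]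
    {C H α : ℝ} (hH : 0 < H) (hα : 0 < α) (f : Ω → ℝ)
    (hf : ∀ M : ℝ, 0 ≤ M → μ {x | C + M ≤ f x} ≤ ENNReal.ofReal (H * Real.exp (-α * M)))
    (t : ℝ) : μ {x | t ≤ f x} ≤ ENNReal.ofReal ((H + 1) * Real.exp (α * C - α * t)) := by
  have hexp := Real.exp_pos (α * C - α * t)
  rcases le_total C t with h | h
  · have := hf (t - C) (by linarith)
    rw [add_sub_cancel] at this
    refine this.trans (ENNReal.ofReal_le_ofReal ?_)
    rw [show -α * (t - C) = α * C - α * t by ring]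
    nlinarith
  · refine prob_le_one.trans ?_
    rw [← ENNReal.ofReal_one]
    refine ENNReal.ofReal_le_ofReal ?_
    have : 1 ≤ Real.exp (α * C - α * t) := Real.one_le_exp (by nlinarith)
    nlinarith

lemma half_sq_sub_le {σ : ℝ} (hσ : 0 < σ) (u v : ℝ) :
    u ^ 2 / 2 - v ^ 2 ≤ σ ^ 2 * ((u - v) / σ) ^ 2 := by
  rw [div_pow, mul_div_cancel₀ _ (by positivity)]
  nlinarith [sq_nonneg (u - 2 * v)]

lemma half_sq_sub_le_swap {σ : ℝ} (hσ : 0 < σ) (u v : ℝ) :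
    v ^ 2 / 2 - u ^ 2 ≤ σ ^ 2 * ((u - v) / σ) ^ 2 := by
  rw [div_pow, mul_div_cancel₀ _ (by positivity)]
  nlinarith [sq_nonneg (v - 2 * u)]

lemma log_exp_two_mul_div {n : ℕ} (hn : 0 < n) {x : ℝ} (hx : 0 < x) :
    Real.log (Real.exp 2 * n / x) = 2 + Real.log n - Real.log x := by
  have hn' : (0 : ℝ) < n := by exact_mod_cast hn
  rw [Real.log_div (by positivity) hx.ne', Real.log_mul (by positivity) hn'.ne', Real.log_exp]

section Selector

variable {n : ℕ} {K σ : ℝ} {θ x : Fin n → ℝ} {Itil : (Fin n → ℝ) → Finset (Fin n)}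
  {S : Finset (Fin n)} {i : Fin n}

lemma noise_lower_of_false_positive {A M ε : ℝ} (hK : 0 < K) (hσ : 0 < σ) (hA : 0 < A)
    (hAK : A < K / 2) (hM : 1 < M) (hε : K * ε = K / 2 - A) (hε0 : 0 < ε)
    (hS : ∀ I : Finset (Fin n), (∑ i ∈ Sᶜ, θ i ^ 2) + A * σ ^ 2 * ell n S.card
      ≤ (∑ i ∈ Iᶜ, θ i ^ 2) + A * σ ^ 2 * ell n I.card)
    (hiS : i ∉ S) (hi : i ∈ ihat K σ Itil x)
    (hsize : ((Itil x).card : ℝ) < M * S.card + (max S.card 1 : ℕ) *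
      Real.exp (ε * Real.log (n / (max S.card 1 : ℕ)))) :
    (K / 2 - A) / 2 * Real.log (n / (max S.card 1 : ℕ)) - K / 2 * Real.log (M + 1)
      ≤ ((x i - θ i) / σ) ^ 2 := by
  have hn : (0 : ℝ) < n := by exact_mod_cast i.pos
  have hσ2 : 0 < σ ^ 2 := by positivity
  unfold ihat at hi
  split_ifs at hi with hempty
  · simp at hi
  have hxi := (Finset.mem_filter.mp hi).2
  have hm : (0 : ℝ) < (Itil x).card := by
    exact_mod_cast Finset.card_pos.mpr (Finset.nonempty_iff_ne_empty.mpr hempty)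
  have hθ := sq_le_of_notMem_minimizer hA.le hS hiS
  have hr0 : (0 : ℝ) < (max S.card 1 : ℕ) := by exact_mod_cast (by simp : 0 < max S.card 1)
  have hrS : (S.card : ℝ) ≤ (max S.card 1 : ℕ) := by exact_mod_cast le_max_left _ _
  have hrS' : ((max S.card 1 : ℕ) : ℝ) ≤ (S.card + 1 : ℕ) := by
    exact_mod_cast (by omega : max S.card 1 ≤ S.card + 1)
  have hrn : ((max S.card 1 : ℕ) : ℝ) ≤ n := by
    have := S.card_le_univ
    rw [Fintype.card_fin] at this
    exact_mod_cast max_le this i.pos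
  set r : ℝ := ((max S.card 1 : ℕ) : ℝ)
  have hL : 0 ≤ Real.log (n / r) := Real.log_nonneg ((one_le_div hr0).mpr hrn)
  have hLeq : Real.log (n / r) = Real.log n - Real.log r := Real.log_div hn.ne' hr0.ne'
  set L := Real.log (n / r)
  have hE : 1 ≤ Real.exp (ε * L) := Real.one_le_exp (by positivity)
  have hmle : ((Itil x).card : ℝ) ≤ (M + 1) * r * Real.exp (ε * L) := by
    have h1 : M * S.card ≤ M * r := by gcongr
    have h2 : M * r ≤ M * r * Real.exp (ε * L) := le_mul_of_one_le_right (by positivity) hE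
    linarith
  have hlogm := Real.log_le_log hm hmle
  rw [Real.log_mul (by positivity) (by positivity), Real.log_mul (by positivity) (by positivity),
    Real.log_exp] at hlogm
  rw [log_exp_two_mul_div i.pos hm] at hxi
  rw [log_exp_two_mul_div i.pos (by positivity)] at hθ
  have hlogs := Real.log_le_log hr0 hrS'
  have hX : K * σ ^ 2 * (2 + L - ε * L - Real.log (M + 1)) ≤ x i ^ 2 :=
    le_trans (mul_le_mul_of_nonneg_left (by linarith) (by positivity)) hxi
  have hθ' : θ i ^ 2 ≤ A * σ ^ 2 * (2 + L) := hθ.trans (mul_le_mul_of_nonneg_left (by linarith) (by positivity))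
  refine le_of_mul_le_mul_left ?_ hσ2
  refine le_trans ?_ (half_sq_sub_le hσ (x i) (θ i))
  have hid : K * σ ^ 2 * (2 + L - ε * L - Real.log (M + 1)) / 2 - A * σ ^ 2 * (2 + L)
      = σ ^ 2 * ((K / 2 - A) / 2 * L - K / 2 * Real.log (M + 1)) + σ ^ 2 * (2 * (K / 2 - A)) := by
    linear_combination (-σ ^ 2 * L / 2) * hε
  have : 0 ≤ σ ^ 2 * (2 * (K / 2 - A)) := mul_nonneg hσ2.le (by linarith)
  linarith

lemma noise_lower_of_false_negative {A δ : ℝ} (hK : 0 < K) (hσ : 0 < σ) (hA : 3 * K ≤ A)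
    (hδ : 0 < δ)
    (hS : ∀ I : Finset (Fin n), (∑ i ∈ Sᶜ, θ i ^ 2) + A * σ ^ 2 * ell n S.card
      ≤ (∑ i ∈ Iᶜ, θ i ^ 2) + A * σ ^ 2 * ell n I.card)
    (hiS : i ∈ S) (hi : i ∉ ihat K σ Itil x) (hsize : δ * S.card < ((Itil x).card : ℝ)) :
    K / 2 * Real.log (n / (max S.card 1 : ℕ)) - K * (2 - Real.log δ)
      ≤ ((x i - θ i) / σ) ^ 2 := by
  have hn : (0 : ℝ) < n := by exact_mod_cast i.pos
  have hσ2 : 0 < σ ^ 2 := by positivity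
  have hSpos : 0 < S.card := Finset.card_pos.mpr ⟨i, hiS⟩
  have hs : (0 : ℝ) < S.card := by exact_mod_cast hSpos
  have hsn : (S.card : ℝ) ≤ n := by
    have := S.card_le_univ
    rw [Fintype.card_fin] at this
    exact_mod_cast this
  have hm : (0 : ℝ) < (Itil x).card := lt_trans (by positivity) hsize
  have hne : Itil x ≠ ∅ := by
    rintro h
    simp [h] at hm
  have hxi : x i ^ 2 < K * σ ^ 2 * Real.log (Real.exp 2 * (n : ℝ) / (Itil x).card) := by
    simpa [ihat, hne] using hi
  have hθ := le_sq_of_mem_minimizer (by linarith) hS hiS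
  rw [max_eq_left (by omega : 1 ≤ S.card)]
  have hL : 0 ≤ Real.log (n / S.card) := Real.log_nonneg ((one_le_div hs).mpr hsn)
  have hLeq : Real.log (n / S.card) = Real.log n - Real.log S.card := Real.log_div hn.ne' hs.ne'
  set L := Real.log (n / S.card)
  have hlogm := Real.log_le_log (by positivity) hsize.le
  rw [Real.log_mul hδ.ne' hs.ne'] at hlogm
  rw [log_exp_two_mul_div i.pos hm] at hxi
  rw [log_exp_two_mul_div i.pos hs] at hθ
  have hX : x i ^ 2 ≤ K * σ ^ 2 * (2 + L - Real.log δ) :=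
    hxi.le.trans (mul_le_mul_of_nonneg_left (by linarith) (by positivity))
  have hθ' : 3 * K * σ ^ 2 * (L + 1) ≤ θ i ^ 2 := by
    refine le_trans ?_ hθ
    rw [show 2 + Real.log n - Real.log S.card - 1 = L + 1 by linarith]
    gcongr
  refine le_of_mul_le_mul_left ?_ hσ2
  refine le_trans ?_ (half_sq_sub_le_swap hσ (x i) (θ i))
  have : 0 ≤ K * σ ^ 2 := by positivity
  linarith

end Selector

lemma ofReal_mul_exp_le {a b c α β L : ℝ} (ha : 0 ≤ a) (hL : 0 ≤ L) (hβ : β ≤ α)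
    (hb : b ≤ c - α * L) :
    ENNReal.ofReal (a * Real.exp b) ≤ ENNReal.ofReal (a * Real.exp c * Real.exp (-β * L)) := by
  refine ENNReal.ofReal_le_ofReal ?_
  rw [mul_assoc, ← Real.exp_add]
  gcongr
  nlinarith

theorem stmt_6 (Cξ Hξ αξ : ℝ) (hCξ : 0 < Cξ) (hHξ : 0 < Hξ) (hαξ : 0 < αξ)
    (K A₀ A₁ α₀ α₁' M₁ δ : ℝ)
    (hK : 0 < K) (hA₀ : 0 < A₀) (hA₁ : 0 < A₁) (hα₀ : 0 < α₀) (hα₁' : 0 < α₁')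
    (hM₁ : 1 < M₁) (hδ : 0 < δ) (hδ1 : δ < 1) (hA01 : A₀ ≤ A₁)
    (hKC : A₀ + Cξ < K / 2)
    (hA1big : K / 2 + αξ⁻¹ * ((Cξ * αξ + 2) / 2 + 1) < A₁ / 6) :
    ∃ H₃ α₄ : ℝ, 0 < H₃ ∧ 0 < α₄ ∧
      ∀ (n : ℕ) (σ : ℝ), 0 < σ →
        ∀ P : (Fin n → ℝ) → Measure (Fin n → ℝ),
          (∀ θ, IsProbabilityMeasure (P θ)) →
          (∀ (θ : Fin n → ℝ) (I : Finset (Fin n)) (M : ℝ), 0 ≤ M →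
              P θ {x | Cξ * I.card + M ≤ ∑ i ∈ I, ((x i - θ i) / σ) ^ 2}
                ≤ ENNReal.ofReal (Hξ * Real.exp (-αξ * M))) →
          ∀ Itil : (Fin n → ℝ) → Finset (Fin n),
            (∀ (x : Fin n → ℝ) (I : Finset (Fin n)),
                (∑ i ∈ (Itil x)ᶜ, x i ^ 2) + K * σ ^ 2 * ell n (Itil x).card
                  ≤ (∑ i ∈ Iᶜ, x i ^ 2) + K * σ ^ 2 * ell n I.card) →
            ∀ Istar : ℝ → (Fin n → ℝ) → Finset (Fin n),
              (∀ (A : ℝ) (θ : Fin n → ℝ), 0 < A → ∀ I : Finset (Fin n),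
                  (∑ i ∈ (Istar A θ)ᶜ, θ i ^ 2) + A * σ ^ 2 * ell n (Istar A θ).card
                    ≤ (∑ i ∈ Iᶜ, θ i ^ 2) + A * σ ^ 2 * ell n I.card) →
              (∀ (θ : Fin n → ℝ) (M : ℝ), 0 ≤ M →
                  P θ {x | M₁ * (Istar A₀ θ).card + M ≤ ((Itil x).card : ℝ)}
                    ≤ ENNReal.ofReal (Hξ / (1 - Real.exp (-1)) *
                        Real.exp (-α₀ * ell n (Istar A₀ θ).card - α₀ * M / 2))) →
              (∀ θ : Fin n → ℝ,
                  P θ {x | ((Itil x).card : ℝ) ≤ δ * (Istar A₁ θ).card}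
                    ≤ ENNReal.ofReal (Hξ / (1 - Real.exp (-1)) *
                        Real.exp (-α₁' * ell n (Istar A₁ θ).card))) →
              ∀ θ : Fin n → ℝ, Istar A₁ θ = Istar A₀ θ →
                (∫⁻ x, ENNReal.ofReal
                    (((ihat K σ Itil x \ Istar A₁ θ).card : ℝ) +
                      ((Istar A₁ θ \ ihat K σ Itil x).card : ℝ)) ∂(P θ))
                  ≤ ENNReal.ofReal
                      (H₃ * (n : ℝ) * ((n : ℝ) / (↑(max (Istar A₁ θ).card 1))) ^ (-α₄)) := by
  have hKA : 0 < K / 2 - A₀ := by linarith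
  have hA₁K : 3 * K ≤ A₁ := by
    have : 0 < αξ⁻¹ * ((Cξ * αξ + 2) / 2 + 1) := by positivity
    linarith
  have hH₀ : 0 < Hξ / (1 - Real.exp (-1)) := by
    have : Real.exp (-1) < 1 := by simp
    exact div_pos hHξ (by linarith)
  set H₀ := Hξ / (1 - Real.exp (-1))
  obtain ⟨ε, hε0, hε⟩ : ∃ ε : ℝ, 0 < ε ∧ K * ε = K / 2 - A₀ :=
    ⟨(K / 2 - A₀) / K, by positivity, by field_simp⟩
  set cP := αξ * Cξ + αξ * (K / 2 * Real.log (M₁ + 1))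
  set cN := αξ * Cξ + αξ * (K * (2 - Real.log δ))
  obtain ⟨α₄, hα₄, hle₁, hle₂, hle₃, hle₄⟩ : ∃ α₄ : ℝ, 0 < α₄ ∧ α₄ ≤ α₀ * ε / 2 ∧
      α₄ ≤ αξ * ((K / 2 - A₀) / 2) ∧ α₄ ≤ α₁' ∧ α₄ ≤ αξ * (K / 2) :=
    ⟨min (min (α₀ * ε / 2) (αξ * ((K / 2 - A₀) / 2))) (min α₁' (αξ * (K / 2))),
      lt_min (lt_min (by positivity) (by positivity)) (lt_min hα₁' (by positivity)),
      (min_le_left _ _).trans (min_le_left _ _), (min_le_left _ _).trans (min_le_right _ _),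
      (min_le_right _ _).trans (min_le_left _ _), (min_le_right _ _).trans (min_le_right _ _)⟩
  set H₃ := H₀ * Real.exp 0 + (Hξ + 1) * Real.exp cP + (Hξ + 1) * Real.exp cN
  have hH₃0 : 0 < H₃ := by positivity
  refine ⟨H₃, α₄, hH₃0, hα₄, ?_⟩
  intro n σ hσ P hP hA1 Itil hItil Istar hIstar hover hunder θ hθ
  have := hP θ
  have hmin₁ := hIstar A₁ θ hA₁
  have hmin₀ := hIstar A₀ θ hA₀
  have hover' := hover θ
  have hunder' := hunder θ
  rw [← hθ] at hmin₀ hover'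
  set S := Istar A₁ θ
  set L := Real.log (n / (max S.card 1 : ℕ)) with hLdef
  set D : (Fin n → ℝ) → Finset (Fin n) := fun x =>
    (ihat K σ Itil x \ S) ∪ (S \ ihat K σ Itil x) with hD
  have hcoord : ∀ i : Fin n, P θ {x | i ∈ D x} ≤ ENNReal.ofReal (H₃ * Real.exp (-α₄ * L)) := by
    intro i
    have hn : (0 : ℝ) < n := by exact_mod_cast i.pos
    have hr1 : (1 : ℝ) ≤ (max S.card 1 : ℕ) := by exact_mod_cast le_max_right _ _
    have hSn : S.card ≤ n := by simpa using S.card_le_univ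
    have hrn : ((max S.card 1 : ℕ) : ℝ) ≤ n := by exact_mod_cast max_le hSn i.pos
    have hL : 0 ≤ L := Real.log_nonneg ((one_le_div (by linarith)).mpr hrn)
    have htail := measure_tail_le (P θ) (C := Cξ) hHξ hαξ (fun x => ((x i - θ i) / σ) ^ 2)
      (fun M hM => by simpa using hA1 θ {i} M hM)
    by_cases hiS : i ∈ S
    · have hSpos : 1 ≤ S.card := Finset.card_pos.mpr ⟨i, hiS⟩
      have hs1 : (1 : ℝ) ≤ S.card := by exact_mod_cast hSpos
      have hell : L ≤ ell n S.card := by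
        have hlog := log_exp_two_mul_div i.pos (by linarith : (0 : ℝ) < S.card)
        have hLeq : L = Real.log n - Real.log S.card := by
          rw [hLdef, max_eq_left hSpos, Real.log_div hn.ne' (by positivity)]
        rw [ell, hlog]
        nlinarith
      have hsub : {x | i ∈ D x} ⊆ {x | ((Itil x).card : ℝ) ≤ δ * S.card} ∪
          {x | K / 2 * L - K * (2 - Real.log δ) ≤ ((x i - θ i) / σ) ^ 2} := by
        intro x hx
        have hx' : i ∉ ihat K σ Itil x := by simpa [hD, hiS] using hx
        rcases le_or_gt ((Itil x).card : ℝ) (δ * S.card) with h | h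
        · exact Or.inl h
        · exact Or.inr (noise_lower_of_false_negative hK hσ hA₁K hδ hmin₁ hiS hx' h)
      refine (measure_mono hsub).trans <| (measure_union_le _ _).trans <|
        (add_le_add (hunder'.trans (ofReal_mul_exp_le (c := 0) hH₀.le hL hle₃ ?_))
          ((htail _).trans (ofReal_mul_exp_le (c := cN) (by positivity) hL hle₄ ?_))).trans ?_
      · nlinarith
      · exact le_of_eq (by simp only [cN]; ring)
      · rw [← ENNReal.ofReal_add (by positivity) (by positivity), ← add_mul]
        refine ENNReal.ofReal_le_ofReal (mul_le_mul_of_nonneg_right ?_ (Real.exp_pos _).le)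
        have : 0 < (Hξ + 1) * Real.exp cP := by positivity
        linarith
    · have hell : 0 ≤ ell n S.card := by
        rcases Nat.eq_zero_or_pos S.card with h | h
        · simp [ell, h]
        · have hs : (0 : ℝ) < S.card := by exact_mod_cast h
          have hlog := Real.log_le_log hs (by exact_mod_cast hSn : (S.card : ℝ) ≤ n)
          rw [ell, log_exp_two_mul_div i.pos hs]
          exact mul_nonneg hs.le (by linarith)
      have hsub : {x | i ∈ D x} ⊆
          {x | M₁ * S.card + (max S.card 1 : ℕ) * Real.exp (ε * L) ≤ ((Itil x).card : ℝ)} ∪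
          {x | (K / 2 - A₀) / 2 * L - K / 2 * Real.log (M₁ + 1) ≤ ((x i - θ i) / σ) ^ 2} := by
        intro x hx
        have hx' : i ∈ ihat K σ Itil x := by simpa [hD, hiS] using hx
        rcases le_or_gt (M₁ * S.card + (max S.card 1 : ℕ) * Real.exp (ε * L))
          ((Itil x).card : ℝ) with h | h
        · exact Or.inl h
        · exact Or.inr (noise_lower_of_false_positive hK hσ hA₀ (by linarith) hM₁ hε hε0 hmin₀
            hiS hx' h)
      have hM : ε * L ≤ (max S.card 1 : ℕ) * Real.exp (ε * L) := by
        have h1 := Real.add_one_le_exp (ε * L)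
        have h2 := le_mul_of_one_le_left (Real.exp_pos (ε * L)).le hr1
        linarith
      refine (measure_mono hsub).trans <| (measure_union_le _ _).trans <|
        (add_le_add ((hover' _ (by positivity)).trans
            (ofReal_mul_exp_le (c := 0) hH₀.le hL hle₁ ?_))
          ((htail _).trans (ofReal_mul_exp_le (c := cP) (by positivity) hL hle₂ ?_))).trans ?_
      · have := mul_le_mul_of_nonneg_left hM hα₀.le
        have := mul_nonneg hα₀.le hell
        linarith
      · exact le_of_eq (by simp only [cP]; ring)
      · rw [← ENNReal.ofReal_add (by positivity) (by positivity), ← add_mul]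
        refine ENNReal.ofReal_le_ofReal (mul_le_mul_of_nonneg_right ?_ (Real.exp_pos _).le)
        have : 0 < (Hξ + 1) * Real.exp cN := by positivity
        linarith
  have hloss : ∀ x, ((ihat K σ Itil x \ S).card : ℝ) + ((S \ ihat K σ Itil x).card : ℝ)
      = ((D x).card : ℝ) := by
    intro x
    rw [hD, card_union_of_disjoint disjoint_sdiff_sdiff]
    push_cast
    rfl
  simp only [hloss]
  refine (lintegral_card_le_sum_measure (P θ) D).trans
    ((Finset.sum_le_sum fun i _ => hcoord i).trans ?_)
  rcases Nat.eq_zero_or_pos n with rfl | hn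
  · simp
  · have hr : (0 : ℝ) < (max S.card 1 : ℕ) := by exact_mod_cast (by simp : 0 < max S.card 1)
    have hn' : (0 : ℝ) < n := by exact_mod_cast hn
    rw [Finset.sum_const, Finset.card_univ, Fintype.card_fin, nsmul_eq_mul,
      ← ENNReal.ofReal_natCast, ← ENNReal.ofReal_mul hn'.le, Real.rpow_def_of_pos (by positivity),
      mul_comm (Real.log _)]
    exact le_of_eq (congrArg _ (by ring))
end
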